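/- Let K be an algebraically closed field of characteristic 0, let f and g be nonconstant, relatively prime polynomials in K[t] with deg f ≥ deg g, set A = f² − g², B = 2fg, C = f² + g², and let w be a nonzero constant polynomial. Suppose the leading term of f² is neither equal to the leading term of g² nor equal to its negative (i.e., it is not the case that deg f = deg g and (leadingCoeff f)² = (leadingCoeff g)², and it is not the case that deg f = deg g and (leadingCoeff f)² = −(leadingCoeff g)²). If (x, y, z) is a solution in positive integers of (wA)^x + (wB)^y = (wC)^z, then x ≤ 2 and z ≤ 2. -/

import Mathlib

open Polynomial

/-!
Write `a ^ x + b ^ y = c ^ z` with `a = w (f² - g²)`, `b = w · 2fg`, `c = w (f² + g²)`.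
As `f` and `g` are coprime and `w` is a unit, `a` and `b` are coprime, so the Mason–Stothers theorem
bounds `deg a ^ x` and `deg c ^ z` strictly by `deg rad (abc) ≤ deg a + deg b + deg c`. If the
leading terms of `f²` and `±g²` differ, then `deg a = deg c = 2 max (deg f) (deg g) ≥ deg b`, so
that `x deg a < 3 deg a` and `z deg c < 3 deg c`.
-/

open UniqueFactorizationMonoid in
theorem radical_pow_mul_pow_mul_pow_dvd {M : Type*} [CommMonoidWithZero M]
    [NormalizationMonoid M] [UniqueFactorizationMonoid M] (a b c : M) (l m n : ℕ) :
    radical (a ^ l * b ^ m * c ^ n) ∣ a * b * c := by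
  have radical_pow_dvd_self (u : M) (k : ℕ) : radical (u ^ k) ∣ u :=
    radical_pow_dvd.trans radical_dvd_self
  calc radical (a ^ l * b ^ m * c ^ n)
      ∣ radical (a ^ l * b ^ m) * radical (c ^ n) := radical_mul_dvd
    _ ∣ radical (a ^ l) * radical (b ^ m) * radical (c ^ n) :=
      mul_dvd_mul_right radical_mul_dvd _
    _ ∣ a * b * c :=
      mul_dvd_mul (mul_dvd_mul (radical_pow_dvd_self a l) (radical_pow_dvd_self b m))
        (radical_pow_dvd_self c n)

theorem isCoprime_sq_sub_sq_two_mul_mul {R : Type*} [CommRing R] {f g : R}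
    (h2 : IsUnit (2 : R)) (hfg : IsCoprime f g) : IsCoprime (f ^ 2 - g ^ 2) (2 * f * g) := by
  have hf : IsCoprime (f ^ 2 - g ^ 2) f := by
    rw [← neg_sub, IsCoprime.neg_left_iff, sq f, IsCoprime.sub_mul_left_left_iff]
    exact hfg.symm.pow_left
  have hg : IsCoprime (f ^ 2 - g ^ 2) g := by
    rw [sq g, IsCoprime.sub_mul_left_left_iff]
    exact hfg.pow_left
  rw [mul_assoc, isCoprime_mul_unit_left_right h2]
  exact hf.mul_right hg

theorem natDegree_add_eq_max {R : Type*} [Semiring R] {p q : R[X]}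
    (h : p.natDegree = q.natDegree → p.leadingCoeff + q.leadingCoeff ≠ 0) :
    (p + q).natDegree = max p.natDegree q.natDegree := by
  rcases lt_trichotomy p.natDegree q.natDegree with hlt | heq | hgt
  · rw [natDegree_add_eq_right_of_natDegree_lt hlt, max_eq_right hlt.le]
  · refine natDegree_eq_of_le_of_coeff_ne_zero (natDegree_add_le p q) ?_
    rw [← heq, max_self, coeff_add, coeff_natDegree, heq, coeff_natDegree]
    exact h heq
  · rw [natDegree_add_eq_left_of_natDegree_lt hgt, max_eq_left hgt.le]

section SumOfSquares

variable {R : Type*} [Ring R] [NoZeroDivisors R] {f g : R[X]}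

theorem natDegree_sq_add_sq
    (h : f.natDegree = g.natDegree → f.leadingCoeff ^ 2 ≠ -g.leadingCoeff ^ 2) :
    (f ^ 2 + g ^ 2).natDegree = 2 * max f.natDegree g.natDegree := by
  rw [natDegree_add_eq_max, natDegree_pow, natDegree_pow, Nat.mul_max_mul_left]
  intro hdeg
  rw [natDegree_pow, natDegree_pow] at hdeg
  rw [leadingCoeff_pow, leadingCoeff_pow, ne_eq, add_eq_zero_iff_eq_neg]
  exact h (by omega)

theorem natDegree_sq_sub_sq
    (h : f.natDegree = g.natDegree → f.leadingCoeff ^ 2 ≠ g.leadingCoeff ^ 2) :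
    (f ^ 2 - g ^ 2).natDegree = 2 * max f.natDegree g.natDegree := by
  rw [sub_eq_add_neg, natDegree_add_eq_max, natDegree_neg, natDegree_pow, natDegree_pow,
    Nat.mul_max_mul_left]
  intro hdeg
  rw [natDegree_neg, natDegree_pow, natDegree_pow] at hdeg
  rw [leadingCoeff_neg, leadingCoeff_pow, leadingCoeff_pow, ← sub_eq_add_neg, sub_ne_zero]
  exact h (by omega)

end SumOfSquares

section CharZero

variable {K : Type*} [Field K] [CharZero K]

theorem natDegree_pow_lt_of_pow_add_pow_eq_pow {a b c : K[X]} {x y z : ℕ}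
    (ha : a ≠ 0) (hb : b ≠ 0) (hc : c ≠ 0) (hab : IsCoprime a b)
    (hpos : 0 < a.natDegree + b.natDegree + c.natDegree) (h : a ^ x + b ^ y = c ^ z) :
    (a ^ x).natDegree < a.natDegree + b.natDegree + c.natDegree ∧
      (b ^ y).natDegree < a.natDegree + b.natDegree + c.natDegree ∧
      (c ^ z).natDegree < a.natDegree + b.natDegree + c.natDegree := by
  classical
  have radical_le : (UniqueFactorizationMonoid.radical (a ^ x * b ^ y * -c ^ z)).natDegree ≤
      a.natDegree + b.natDegree + c.natDegree := by
    rw [mul_neg, UniqueFactorizationDomain.radical_neg, ← natDegree_mul ha hb,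
      ← natDegree_mul (mul_ne_zero ha hb) hc]
    exact natDegree_le_of_dvd (radical_pow_mul_pow_mul_pow_dvd a b c x y z)
      (mul_ne_zero (mul_ne_zero ha hb) hc)
  have hsum : a ^ x + b ^ y + -c ^ z = 0 := by rw [h, add_neg_cancel]
  have mason_stothers := Polynomial.abc (pow_ne_zero x ha) (pow_ne_zero y hb)
    (neg_ne_zero.mpr (pow_ne_zero z hc)) hab.pow hsum
  rw [derivative_eq_zero, derivative_eq_zero, derivative_eq_zero, natDegree_neg] at mason_stothers
  omega

theorem exponents_le_two_of_pow_add_pow_eq_pow {a b c : K[X]} {x y z : ℕ}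
    (hab : IsCoprime a b) (ha : 0 < a.natDegree) (hba : b.natDegree ≤ a.natDegree)
    (hca : c.natDegree = a.natDegree) (h : a ^ x + b ^ y = c ^ z) : x ≤ 2 ∧ z ≤ 2 := by
  have ha0 : a ≠ 0 := ne_zero_of_natDegree_gt ha
  have hb0 : b ≠ 0 := by
    rintro rfl
    exact ha.ne' (natDegree_eq_zero_of_isUnit (isCoprime_zero_right.mp hab))
  have hc0 : c ≠ 0 := ne_zero_of_natDegree_gt (hca ▸ ha)
  obtain ⟨hx, -, hz⟩ :=
    natDegree_pow_lt_of_pow_add_pow_eq_pow ha0 hb0 hc0 hab (by omega) h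
  rw [natDegree_pow] at hx hz
  rw [hca] at hz
  have hx3 : x * a.natDegree < 3 * a.natDegree := by omega
  have hz3 : z * a.natDegree < 3 * a.natDegree := by omega
  exact ⟨Nat.lt_succ_iff.mp (Nat.lt_of_mul_lt_mul_right hx3),
    Nat.lt_succ_iff.mp (Nat.lt_of_mul_lt_mul_right hz3)⟩

theorem jesmanowicz_poly_bounds_case1_general {f g w : K[X]}
    (hpos : 0 < max f.natDegree g.natDegree) (hfg : IsCoprime f g) (hw : IsUnit w)
    (hsub : f.natDegree = g.natDegree → f.leadingCoeff ^ 2 ≠ g.leadingCoeff ^ 2)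
    (hadd : f.natDegree = g.natDegree → f.leadingCoeff ^ 2 ≠ -g.leadingCoeff ^ 2)
    {x y z : ℕ}
    (heq : (w * (f ^ 2 - g ^ 2)) ^ x + (w * (2 * f * g)) ^ y = (w * (f ^ 2 + g ^ 2)) ^ z) :
    x ≤ 2 ∧ z ≤ 2 := by
  obtain ⟨u, hu, rfl⟩ := Polynomial.isUnit_iff.mp hw
  have two_isUnit : IsUnit (2 : K[X]) := isUnit_C.mpr (IsUnit.mk0 (2 : K) two_ne_zero)
  have hB : (2 * f * g).natDegree ≤ 2 * max f.natDegree g.natDegree := by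
    rw [mul_assoc, ← C_ofNat, natDegree_C_mul two_ne_zero]
    have := natDegree_mul_le (p := f) (q := g)
    omega
  refine exponents_le_two_of_pow_add_pow_eq_pow ?_ ?_ ?_ ?_ heq
  · rw [isCoprime_mul_unit_left hw]
    exact isCoprime_sq_sub_sq_two_mul_mul two_isUnit hfg
  all_goals simp only [natDegree_C_mul hu.ne_zero, natDegree_sq_sub_sq hsub,
    natDegree_sq_add_sq hadd]
  · omega
  · exact hB

end CharZero

theorem jesmanowicz_poly_bounds_case1
    {K : Type*} [Field K] [CharZero K] [IsAlgClosed K]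
    (f g w : K[X])
    (hf : 0 < f.natDegree) (hg : 0 < g.natDegree)
    (hdeg : g.natDegree ≤ f.natDegree)
    (hfg : IsCoprime f g) (hw : w ≠ 0) (hwc : w.natDegree = 0)
    (hLT1 : ¬ (f.natDegree = g.natDegree ∧ f.leadingCoeff ^ 2 = g.leadingCoeff ^ 2))
    (hLT2 : ¬ (f.natDegree = g.natDegree ∧ f.leadingCoeff ^ 2 = -g.leadingCoeff ^ 2))
    (x y z : ℕ) (hx : 0 < x) (hy : 0 < y) (hz : 0 < z)
    (heq : (w * (f ^ 2 - g ^ 2)) ^ x + (w * (2 * f * g)) ^ y = (w * (f ^ 2 + g ^ 2)) ^ z) :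
    x ≤ 2 ∧ z ≤ 2 := by
  exact jesmanowicz_poly_bounds_case1_general (lt_max_of_lt_left hf) hfg
    (isUnit_iff_degree_eq_zero.mpr ((degree_eq_iff_natDegree_eq hw).mpr hwc))
    (not_and.mp hLT1) (not_and.mp hLT2) heq
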